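/- Let T > 0, let b : ℝ → ℝ be Lipschitz continuous, let σ and σ̃ belong to the class M with σ(x) > 0 and σ̃(x) > 0 for all x, and let f : ℝ → ℝ be of class C² with f''(x) ≠ 0 for all x ∈ ℝ. Let u be a classical solution of the parabolic equation associated with (b, σ, f) and let ũ be a classical solution of the parabolic equation associated with (b, σ̃, f), and suppose there exist ε ∈ (0, T) and a nonempty open set ω ⊂ ℝ with u = ũ on (0, ε) × ω. Let x₀ ∈ ω and x₂ > x₀ be such that σ² − σ̃² has a constant sign on [x₀, x₂] (i.e., σ² − σ̃² ≥ 0 on [x₀, x₂] or σ² − σ̃² ≤ 0 on [x₀, x₂]). Then σ(x) = σ̃(x) for all x ∈ [x₀, x₂]. -/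

import Mathlib

open Set Filter

/-- A function `ψ : ℝ → ℝ` is piecewise analytic if there exist `δ > 0`, a strictly
increasing sequence `(κ j)_{j ∈ ℤ}` tending to `-∞` at `-∞` and `+∞` at `+∞` with
`κ (j+1) - κ j > δ`, and functions `φ j` analytic on `[κ j, κ (j+1)]`, such that
`ψ = φ j` on `[κ j, κ (j+1))`. -/
def PiecewiseAnalytic (ψ : ℝ → ℝ) : Prop :=
  ∃ (δ : ℝ) (κ : ℤ → ℝ) (φ : ℤ → ℝ → ℝ),
    0 < δ ∧ StrictMono κ ∧
    Tendsto κ atBot atBot ∧ Tendsto κ atTop atTop ∧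
    (∀ j : ℤ, δ < κ (j + 1) - κ j) ∧
    (∀ j : ℤ, AnalyticOn ℝ (φ j) (Icc (κ j) (κ (j + 1)))) ∧
    (∀ j : ℤ, ∀ x ∈ Ico (κ j) (κ (j + 1)), ψ x = φ j x)

/-- The class `M` of Lipschitz-continuous, piecewise analytic functions on `ℝ`. -/
def ClassM (ψ : ℝ → ℝ) : Prop :=
  (∃ K, LipschitzWith K ψ) ∧ PiecewiseAnalytic ψ

/-- `u : [0,T) × ℝ → ℝ` is a classical solution of
`∂ₜ u = (1/2) σ(x)² ∂ₓₓ u + b(x) ∂ₓ u`, `u(0, ·) = f`: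
`u`, `∂ₜ u`, `∂ₓ u`, `∂ₓₓ u` exist and are continuous on `[0,T) × ℝ`, the PDE holds
there, and the initial condition holds. -/
def IsClassicalSolution (T : ℝ) (b σ f : ℝ → ℝ) (u : ℝ → ℝ → ℝ) : Prop :=
  ContinuousOn (fun p : ℝ × ℝ => u p.1 p.2) (Ico 0 T ×ˢ univ) ∧
  (∀ t ∈ Ico 0 T, ∀ x : ℝ, DifferentiableAt ℝ (fun s => u s x) t) ∧
  (∀ t ∈ Ico 0 T, ∀ x : ℝ, DifferentiableAt ℝ (fun y => u t y) x) ∧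
  (∀ t ∈ Ico 0 T, ∀ x : ℝ, DifferentiableAt ℝ (deriv (fun y => u t y)) x) ∧
  ContinuousOn (fun p : ℝ × ℝ => deriv (fun s => u s p.2) p.1) (Ico 0 T ×ˢ univ) ∧
  ContinuousOn (fun p : ℝ × ℝ => deriv (fun y => u p.1 y) p.2) (Ico 0 T ×ˢ univ) ∧
  ContinuousOn (fun p : ℝ × ℝ => deriv (deriv (fun y => u p.1 y)) p.2) (Ico 0 T ×ˢ univ) ∧
  (∀ t ∈ Ico 0 T, ∀ x : ℝ,
    deriv (fun s => u s x) t =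
      (1 / 2) * (σ x) ^ 2 * deriv (deriv (fun y => u t y)) x
        + b x * deriv (fun y => u t y) x) ∧
  (∀ x : ℝ, u 0 x = f x)

/-- `ψ` has a constant sign on `s`: it is nonnegative on all of `s` or nonpositive on
all of `s`. -/
def ConstSignOn (ψ : ℝ → ℝ) (s : Set ℝ) : Prop :=
  (∀ x ∈ s, 0 ≤ ψ x) ∨ (∀ x ∈ s, ψ x ≤ 0)

/-!
Let `w = r (u - ũ)`, where the sign `r ≠ 0` is such that `r (σ² - σ̃²) f'' ≥ 0` on `[x₀, x₂]`. Then
`∂ₜ w - (σ²/2) ∂ₓₓ w - b ∂ₓ w = (r/2) (σ² - σ̃²) ∂ₓₓ ũ`, and since `∂ₓₓ ũ` has the sign of `f''` for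
small times, `w` is a supersolution there. If `σ ≠ σ̃` at some `x₁`, then `∂ₜ w (0, x₁) > 0`, so `w`
is positive at `x₁` for small times, and the strong minimum principle on `[0, τ] × [x₀, x₁]`
spreads this positivity to points of `ω` close to `x₀`, where `w` vanishes. The strong principle is
obtained by comparing `w` with an exponential barrier travelling to the left.
-/

open Topology Function

lemma deriv_deriv_nonneg_of_isLocalMin {g : ℝ → ℝ} {x : ℝ} (hg : ContinuousAt g x)
    (hmin : IsLocalMin g x) : 0 ≤ deriv (deriv g) x := by
  by_contra! hneg
  have hmax : IsLocalMax g x := isLocalMax_of_deriv_deriv_neg hneg hmin.deriv_eq_zero hg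
  have hconst : g =ᶠ[𝓝 x] fun _ => g x := by
    filter_upwards [hmin, hmax] with y hle hge using le_antisymm hge hle
  have hzero : deriv (deriv g) x = 0 := by
    simpa using hconst.deriv.deriv_eq
  exact hneg.ne hzero

lemma deriv_nonpos_of_isMinOn_Icc_right {g : ℝ → ℝ} {a t : ℝ} (hat : a < t)
    (hg : DifferentiableAt ℝ g t) (hmin : IsMinOn g (Icc a t) t) : deriv g t ≤ 0 := by
  have hcone : a - t ∈ posTangentConeAt (Icc a t) t :=
    sub_mem_posTangentConeAt_of_segment_subset (by rw [segment_symm, segment_eq_Icc hat.le])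
  have hle : 0 ≤ (a - t) * deriv g t := by
    simpa using hmin.localize.hasFDerivWithinAt_nonneg hg.hasFDerivAt.hasFDerivWithinAt hcone
  nlinarith

lemma eventually_nhdsGT_pos_of_deriv_pos {g : ℝ → ℝ} {a : ℝ} (hg : 0 < deriv g a)
    (ha : g a = 0) : ∀ᶠ t in 𝓝[>] a, 0 < g t := by
  filter_upwards [nhdsWithin_le_nhds (eventually_nhdsWithin_sign_eq_of_deriv_pos hg ha),
    self_mem_nhdsWithin] with t hsign ht
  rwa [sign_pos (sub_pos.2 ht), sign_eq_one_iff] at hsign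

lemma exists_pos_forall_le_of_continuousWithinAt_Icc {g : ℝ → ℝ} {a b : ℝ} (hab : a < b)
    (hg : ContinuousWithinAt g (Icc a b) b) (hb : 0 < g b) :
    ∃ τ ∈ Ico a b, ∃ m > 0, ∀ t ∈ Icc τ b, m ≤ g t := by
  have hev : ∀ᶠ t in 𝓝[≤] b, g b / 2 < g t ∧ a ≤ t := by
    rw [← nhdsWithin_Icc_eq_nhdsLE hab]
    filter_upwards [hg.eventually_const_lt (half_lt_self hb), self_mem_nhdsWithin]
      with t hlt ht using ⟨hlt, ht.1⟩
  obtain ⟨τ, hτ, hsub⟩ := (mem_nhdsLE_iff_exists_Icc_subset (a := b)).1 hev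
  exact ⟨τ, ⟨(hsub ⟨le_rfl, hτ.le⟩).2, hτ⟩, g b / 2, half_pos hb, fun t ht => (hsub ht).1.le⟩

/-- The regularity of `U` at `(t, x)` that gives a meaning to a second-order parabolic operator
applied to `U` there. -/
structure ParabolicDifferentiableAt (U : ℝ → ℝ → ℝ) (t x : ℝ) : Prop where
  time : DifferentiableAt ℝ (fun s => U s x) t
  space : ∀ᶠ y in 𝓝 x, DifferentiableAt ℝ (U t) y
  deriv_space : DifferentiableAt ℝ (deriv (U t)) x

/-- The parabolic operator `∂ₜ U - A ∂ₓₓ U - β ∂ₓ U`, where `U` is a function of time and space;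
supersolutions are the functions on which it is nonnegative. -/
noncomputable def parabolicOp (A β U : ℝ → ℝ → ℝ) (t x : ℝ) : ℝ :=
  deriv (fun s => U s x) t - A t x * deriv (deriv (U t)) x - β t x * deriv (U t) x

/-- The parabolic boundary of `[t₀, t₁] × [x₀, x₁]`: the initial side and the two lateral sides. -/
def parabolicBoundary (t₀ t₁ x₀ x₁ : ℝ) : Set (ℝ × ℝ) :=
  (Icc t₀ t₁ ×ˢ Icc x₀ x₁) \ (Ioc t₀ t₁ ×ˢ Ioo x₀ x₁)

section Operator

variable {A β U V : ℝ → ℝ → ℝ} {t x : ℝ}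

lemma ParabolicDifferentiableAt.const_smul (hU : ParabolicDifferentiableAt U t x) (r : ℝ) :
    ParabolicDifferentiableAt (r • U) t x where
  time := hU.time.const_smul r
  space := hU.space.mono fun _ h => h.const_smul r
  deriv_space := by
    have hderiv : deriv ((r • U) t) = r • deriv (U t) :=
      funext fun _ => deriv_const_smul_field r (U t)
    exact hderiv ▸ hU.deriv_space.const_smul r

lemma ParabolicDifferentiableAt.deriv_sub_eventuallyEq (hU : ParabolicDifferentiableAt U t x)
    (hV : ParabolicDifferentiableAt V t x) :
    deriv ((U - V) t) =ᶠ[𝓝 x] deriv (U t) - deriv (V t) := by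
  filter_upwards [hU.space, hV.space] with y hUy hVy using deriv_sub hUy hVy

lemma ParabolicDifferentiableAt.sub (hU : ParabolicDifferentiableAt U t x)
    (hV : ParabolicDifferentiableAt V t x) : ParabolicDifferentiableAt (U - V) t x where
  time := hU.time.sub hV.time
  space := by filter_upwards [hU.space, hV.space] with y hUy hVy using hUy.sub hVy
  deriv_space :=
    (hU.deriv_space.sub hV.deriv_space).congr_of_eventuallyEq (hU.deriv_sub_eventuallyEq hV)

lemma parabolicOp_const_smul (r : ℝ) :
    parabolicOp A β (r • U) t x = r * parabolicOp A β U t x := by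
  have htime : deriv (fun s => (r • U) s x) t = r * deriv (fun s => U s x) t :=
    deriv_const_mul_field r
  have hspace : deriv ((r • U) t) = r • deriv (U t) :=
    funext fun _ => deriv_const_smul_field r (U t)
  have hspace₂ : deriv (r • deriv (U t)) x = r * deriv (deriv (U t)) x :=
    deriv_const_smul_field r (deriv (U t))
  rw [parabolicOp, htime, hspace, hspace₂, Pi.smul_apply, smul_eq_mul, parabolicOp]
  ring

lemma parabolicOp_sub (hU : ParabolicDifferentiableAt U t x)
    (hV : ParabolicDifferentiableAt V t x) :
    parabolicOp A β (U - V) t x = parabolicOp A β U t x - parabolicOp A β V t x := by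
  have htime : deriv (fun s => (U - V) s x) t
      = deriv (fun s => U s x) t - deriv (fun s => V s x) t := deriv_sub hU.time hV.time
  have hspace := hU.deriv_sub_eventuallyEq hV
  have hspace₂ : deriv (deriv ((U - V) t)) x = deriv (deriv (U t)) x - deriv (deriv (V t)) x :=
    hspace.deriv_eq.trans (deriv_sub hU.deriv_space hV.deriv_space)
  rw [parabolicOp, htime, hspace₂, hspace.eq_of_nhds, Pi.sub_apply, parabolicOp, parabolicOp]
  ring

lemma mem_parabolicBoundary_iff {t₀ t₁ x₀ x₁ : ℝ} :
    (t, x) ∈ parabolicBoundary t₀ t₁ x₀ x₁ ↔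
      (t ∈ Icc t₀ t₁ ∧ x ∈ Icc x₀ x₁) ∧ (t = t₀ ∨ x = x₀ ∨ x = x₁) := by
  simp only [parabolicBoundary, Set.mem_sdiff, mem_prod, mem_Icc, mem_Ioc, mem_Ioo]
  grind

end Operator

section MinimumPrinciple

variable {A β U : ℝ → ℝ → ℝ} {t₀ t₁ x₀ x₁ : ℝ}

theorem nonneg_of_parabolicOp_pos
    (hA : ∀ t ∈ Ioc t₀ t₁, ∀ x ∈ Ioo x₀ x₁, 0 ≤ A t x)
    (hUc : ContinuousOn (uncurry U) (Icc t₀ t₁ ×ˢ Icc x₀ x₁))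
    (hUd : ∀ t ∈ Ioc t₀ t₁, ∀ x ∈ Ioo x₀ x₁, ParabolicDifferentiableAt U t x)
    (hop : ∀ t ∈ Ioc t₀ t₁, ∀ x ∈ Ioo x₀ x₁, 0 < parabolicOp A β U t x)
    (hbd : ∀ p ∈ parabolicBoundary t₀ t₁ x₀ x₁, 0 ≤ uncurry U p) :
    ∀ p ∈ Icc t₀ t₁ ×ˢ Icc x₀ x₁, 0 ≤ uncurry U p := by
  intro q hq
  obtain ⟨⟨t, x⟩, hp, hmin⟩ := (isCompact_Icc.prod isCompact_Icc).exists_isMinOn ⟨q, hq⟩ hUc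
  refine le_trans (hbd _ ⟨hp, ?_⟩) (hmin hq)
  rintro ⟨ht, hx⟩
  have hreg := hUd t ht x hx
  have htime : deriv (fun s => U s x) t ≤ 0 :=
    deriv_nonpos_of_isMinOn_Icc_right ht.1 hreg.time fun s hs =>
      hmin (show (s, x) ∈ _ from ⟨⟨hs.1, hs.2.trans ht.2⟩, hp.2⟩)
  have hlocal : IsLocalMin (U t) x := by
    filter_upwards [Icc_mem_nhds hx.1 hx.2] with y hy
    exact hmin (show (t, y) ∈ _ from ⟨hp.1, hy⟩)
  have hspace₂ : 0 ≤ A t x * deriv (deriv (U t)) x :=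
    mul_nonneg (hA t ht x hx)
      (deriv_deriv_nonneg_of_isLocalMin hreg.space.self_of_nhds.continuousAt hlocal)
  have hpos := hop t ht x hx
  rw [parabolicOp, hlocal.deriv_eq_zero] at hpos
  linarith

end MinimumPrinciple

/-- The exponential `exp (l ((x - a) - k (s - t))) - 1`, a wave travelling to the left at speed `k`
which vanishes on the line through `(s, a)`; for large `l` it is a strict subsolution. -/
noncomputable def travellingBarrier (l k s a t x : ℝ) : ℝ :=
  Real.exp (l * ((x - a) - k * (s - t))) - 1

namespace travellingBarrier

variable {l k s a t x : ℝ}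

lemma hasDerivAt_time : HasDerivAt (fun r => travellingBarrier l k s a r x)
    (l * k * Real.exp (l * ((x - a) - k * (s - t)))) t := by
  have hphase : HasDerivAt (fun r : ℝ => l * ((x - a) - k * (s - r))) (l * k) t :=
    (((((hasDerivAt_id' t).const_sub s).const_mul k).const_sub (x - a)).const_mul l).congr_deriv
      (by ring)
  exact (hphase.exp.sub_const 1).congr_deriv (by ring)

lemma hasDerivAt_space : HasDerivAt (travellingBarrier l k s a t)
    (l * Real.exp (l * ((x - a) - k * (s - t)))) x := by
  have hphase : HasDerivAt (fun y : ℝ => l * ((y - a) - k * (s - t))) l x :=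
    ((((hasDerivAt_id' x).sub_const a).sub_const (k * (s - t))).const_mul l).congr_deriv (by ring)
  exact (hphase.exp.sub_const 1).congr_deriv (by ring)

lemma deriv_space : deriv (travellingBarrier l k s a t) =
    fun y => l * (travellingBarrier l k s a t y + 1) := by
  funext y
  rw [hasDerivAt_space.deriv, travellingBarrier, sub_add_cancel]

lemma hasDerivAt_deriv_space : HasDerivAt (deriv (travellingBarrier l k s a t))
    (l * (l * Real.exp (l * ((x - a) - k * (s - t))))) x := by
  rw [deriv_space]
  exact (hasDerivAt_space.add_const 1).const_mul l

lemma parabolicDifferentiableAt : ParabolicDifferentiableAt (travellingBarrier l k s a) t x where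
  time := hasDerivAt_time.differentiableAt
  space := .of_forall fun _ => hasDerivAt_space.differentiableAt
  deriv_space := hasDerivAt_deriv_space.differentiableAt

lemma continuous : Continuous (uncurry (travellingBarrier l k s a)) := by
  unfold travellingBarrier uncurry
  fun_prop

lemma parabolicOp_neg {A β : ℝ → ℝ → ℝ} (hl : 0 < l) (hk : k < A t x * l + β t x) :
    parabolicOp A β (travellingBarrier l k s a) t x < 0 := by
  have hfactor : parabolicOp A β (travellingBarrier l k s a) t x =
      l * Real.exp (l * ((x - a) - k * (s - t))) * (k - (A t x * l + β t x)) := by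
    rw [parabolicOp, hasDerivAt_time.deriv, hasDerivAt_deriv_space.deriv, hasDerivAt_space.deriv]
    ring
  rw [hfactor]
  exact mul_neg_of_pos_of_neg (by positivity) (sub_neg.2 hk)

lemma nonpos (hl : 0 ≤ l) (hx : x - a ≤ k * (s - t)) : travellingBarrier l k s a t x ≤ 0 :=
  sub_nonpos.2 (Real.exp_le_one_iff.2 (mul_nonpos_of_nonneg_of_nonpos hl (sub_nonpos.2 hx)))

lemma le_exp (hl : 0 ≤ l) (hk : 0 ≤ k) (ht : t ≤ s) :
    travellingBarrier l k s a t x ≤ Real.exp (l * (x - a)) := by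
  have hphase : (x - a) - k * (s - t) ≤ x - a := sub_le_self _ (mul_nonneg hk (sub_nonneg.2 ht))
  exact (sub_le_self _ zero_le_one).trans
    (Real.exp_le_exp.2 (mul_le_mul_of_nonneg_left hphase hl))

lemma pos_final (hl : 0 < l) (hx : a < x) : 0 < travellingBarrier l k s a s x :=
  sub_pos.2 (Real.one_lt_exp_iff.2 (mul_pos hl (by linarith)))

end travellingBarrier

section StrongMinimumPrinciple

variable {A β U : ℝ → ℝ → ℝ} {t₀ t₁ x₀ x₁ c : ℝ}

lemma exists_strict_subsolution {τ m : ℝ} (hc : 0 < c) (B : ℝ) (hτ : τ < t₁) (hx : x₀ < x₁)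
    (hm : 0 < m) : ∃ V : ℝ → ℝ → ℝ, Continuous (uncurry V) ∧
      (∀ t x, ParabolicDifferentiableAt V t x) ∧
      (∀ A β t x, c ≤ A t x → B ≤ β t x → parabolicOp A β V t x < 0) ∧
      (∀ t ≤ τ, ∀ x ≤ x₁, V t x ≤ 0) ∧ (∀ t ≤ t₁, V t x₀ ≤ 0) ∧ (∀ t ≤ t₁, V t x₁ ≤ m) ∧
      ∀ x > x₀, 0 < V t₁ x := by
  -- At speed `k` the zero of the barrier sweeps from `x₁` at time `τ` to `x₀` at time `t₁`.
  obtain ⟨k, hk, hkτ⟩ : ∃ k > 0, k * (t₁ - τ) = x₁ - x₀ :=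
    ⟨(x₁ - x₀) / (t₁ - τ), div_pos (by linarith) (by linarith),
      div_mul_cancel₀ _ (sub_pos.2 hτ).ne'⟩
  obtain ⟨l, hl, hlk⟩ : ∃ l > 0, k - B < c * l :=
    ⟨(|k - B| + 1) / c, by positivity, by
      rw [mul_div_cancel₀ _ hc.ne']
      exact (le_abs_self _).trans_lt (lt_add_one _)⟩
  obtain ⟨r, hr, hrm⟩ : ∃ r > 0, r * Real.exp (l * (x₁ - x₀)) = m :=
    ⟨m / Real.exp (l * (x₁ - x₀)), by positivity, div_mul_cancel₀ _ (Real.exp_pos _).ne'⟩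
  refine ⟨r • travellingBarrier l k t₁ x₀, travellingBarrier.continuous.const_smul r,
    fun t x => travellingBarrier.parabolicDifferentiableAt.const_smul r,
    fun A β t x hA hβ => ?_, fun t ht x hx => ?_, fun t ht => ?_, fun t ht => ?_, fun x hx => ?_⟩
  · have hAl : c * l ≤ A t x * l := mul_le_mul_of_nonneg_right hA hl.le
    rw [parabolicOp_const_smul]
    exact mul_neg_of_pos_of_neg hr (travellingBarrier.parabolicOp_neg hl (by linarith))
  · have hkt : k * (t₁ - τ) ≤ k * (t₁ - t) := mul_le_mul_of_nonneg_left (by linarith) hk.le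
    exact mul_nonpos_of_nonneg_of_nonpos hr.le (travellingBarrier.nonpos hl.le (by linarith))
  · have hkt : 0 ≤ k * (t₁ - t) := mul_nonneg hk.le (sub_nonneg.2 ht)
    exact mul_nonpos_of_nonneg_of_nonpos hr.le (travellingBarrier.nonpos hl.le (by linarith))
  · exact (mul_le_mul_of_nonneg_left (travellingBarrier.le_exp hl.le hk.le ht) hr.le).trans hrm.le
  · exact mul_pos hr (travellingBarrier.pos_final hl hx)

theorem pos_of_parabolicOp_nonneg {B : ℝ} (hc : 0 < c)
    (hA : ∀ t ∈ Ioc t₀ t₁, ∀ x ∈ Ioo x₀ x₁, c ≤ A t x)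
    (hβ : ∀ t ∈ Ioc t₀ t₁, ∀ x ∈ Ioo x₀ x₁, B ≤ β t x)
    (hUc : ContinuousOn (uncurry U) (Icc t₀ t₁ ×ˢ Icc x₀ x₁))
    (hUd : ∀ t ∈ Ioc t₀ t₁, ∀ x ∈ Ioo x₀ x₁, ParabolicDifferentiableAt U t x)
    (hop : ∀ t ∈ Ioc t₀ t₁, ∀ x ∈ Ioo x₀ x₁, 0 ≤ parabolicOp A β U t x)
    (hbd : ∀ p ∈ parabolicBoundary t₀ t₁ x₀ x₁, 0 ≤ uncurry U p)
    (ht : t₀ < t₁) (hcorner : 0 < U t₁ x₁) :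
    ∀ x ∈ Ioc x₀ x₁, 0 < U t₁ x := by
  intro y hy
  have hx : x₀ < x₁ := hy.1.trans_le hy.2
  have hright : ContinuousWithinAt (fun t => U t x₁) (Icc t₀ t₁) t₁ :=
    (hUc (t₁, x₁) ⟨right_mem_Icc.2 ht.le, right_mem_Icc.2 hx.le⟩).comp (f := fun t => (t, x₁))
      (by fun_prop) fun t ht => ⟨ht, right_mem_Icc.2 hx.le⟩
  obtain ⟨τ, hτ, m, hm, hUm⟩ := exists_pos_forall_le_of_continuousWithinAt_Icc ht hright hcorner
  obtain ⟨V, hVc, hVd, hVop, hVτ, hVl, hVr, hVpos⟩ := exists_strict_subsolution hc B hτ.2 hx hm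
  have hsub : ∀ p ∈ Icc t₀ t₁ ×ˢ Icc x₀ x₁, 0 ≤ uncurry (U - V) p := by
    refine nonneg_of_parabolicOp_pos (A := A) (β := β)
      (fun t ht x hx => hc.le.trans (hA t ht x hx)) (hUc.sub hVc.continuousOn)
      (fun t ht x hx => (hUd t ht x hx).sub (hVd t x)) (fun t ht x hx => ?_) ?_
    · rw [parabolicOp_sub (hUd t ht x hx) (hVd t x)]
      linarith [hop t ht x hx, hVop A β t x (hA t ht x hx) (hβ t ht x hx)]
    · rintro ⟨t, x⟩ hp
      refine sub_nonneg.2 (?_ : V t x ≤ U t x)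
      have hU : 0 ≤ U t x := hbd _ hp
      obtain ⟨⟨htI, hxI⟩, rfl | rfl | rfl⟩ := mem_parabolicBoundary_iff.1 hp
      · exact (hVτ t hτ.1 x hxI.2).trans hU
      · exact (hVl t htI.2).trans hU
      · rcases le_total t τ with htτ | hτt
        · exact (hVτ t htτ x le_rfl).trans hU
        · exact (hVr t htI.2).trans (hUm t ⟨hτt, htI.2⟩)
  exact (hVpos y hy.1).trans_le
    (sub_nonneg.1 (hsub (t₁, y) ⟨right_mem_Icc.2 ht.le, Ioc_subset_Icc_self hy⟩))

theorem pos_of_parabolicOp_nonneg_of_continuousOn {a d : ℝ → ℝ}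
    (ha : ContinuousOn a (Icc x₀ x₁)) (ha_pos : ∀ x ∈ Icc x₀ x₁, 0 < a x)
    (hd : ContinuousOn d (Icc x₀ x₁))
    (hUc : ContinuousOn (uncurry U) (Icc t₀ t₁ ×ˢ Icc x₀ x₁))
    (hUd : ∀ t ∈ Ioc t₀ t₁, ∀ x ∈ Ioo x₀ x₁, ParabolicDifferentiableAt U t x)
    (hop : ∀ t ∈ Ioc t₀ t₁, ∀ x ∈ Ioo x₀ x₁, 0 ≤ parabolicOp (fun _ => a) (fun _ => d) U t x)
    (hbd : ∀ p ∈ parabolicBoundary t₀ t₁ x₀ x₁, 0 ≤ uncurry U p)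
    (ht : t₀ < t₁) (hcorner : 0 < U t₁ x₁) :
    ∀ x ∈ Ioc x₀ x₁, 0 < U t₁ x := by
  obtain ⟨c, hc, hac⟩ := isCompact_Icc.exists_forall_le' ha ha_pos
  obtain ⟨B, hB⟩ := isCompact_Icc.bddBelow_image hd
  exact pos_of_parabolicOp_nonneg hc (fun _ _ x hx => hac x (Ioo_subset_Icc_self hx))
    (fun _ _ x hx => hB (mem_image_of_mem d (Ioo_subset_Icc_self hx))) hUc hUd hop hbd ht hcorner

end StrongMinimumPrinciple

namespace ConstSignOn

variable {φ ψ : ℝ → ℝ} {S : Set ℝ}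

lemma of_isPreconnected (hS : IsPreconnected S) (hψ : ContinuousOn ψ S)
    (hne : ∀ x ∈ S, ψ x ≠ 0) : ConstSignOn ψ S := by
  by_contra hsign
  simp only [ConstSignOn, not_or, not_forall, not_le] at hsign
  obtain ⟨⟨x, hx, hψx⟩, y, hy, hψy⟩ := hsign
  obtain ⟨z, hz, hψz⟩ := hS.intermediate_value hx hy hψ ⟨hψx.le, hψy.le⟩
  exact hne z hz hψz

lemma mul (hφ : ConstSignOn φ S) (hψ : ConstSignOn ψ S) :
    ConstSignOn (fun x => φ x * ψ x) S := by
  rcases hφ with hφ | hφ <;> rcases hψ with hψ | hψ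
  · exact .inl fun x hx => mul_nonneg (hφ x hx) (hψ x hx)
  · exact .inr fun x hx => mul_nonpos_of_nonneg_of_nonpos (hφ x hx) (hψ x hx)
  · exact .inr fun x hx => mul_nonpos_of_nonpos_of_nonneg (hφ x hx) (hψ x hx)
  · exact .inl fun x hx => mul_nonneg_of_nonpos_of_nonpos (hφ x hx) (hψ x hx)

lemma exists_mul_nonneg (hψ : ConstSignOn ψ S) : ∃ r ≠ 0, ∀ x ∈ S, 0 ≤ r * ψ x := by
  rcases hψ with hψ | hψ
  · exact ⟨1, one_ne_zero, fun x hx => by simpa using hψ x hx⟩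
  · exact ⟨-1, by norm_num, fun x hx => by simpa using hψ x hx⟩

end ConstSignOn

namespace IsClassicalSolution

variable {T : ℝ} {b σ ρ f : ℝ → ℝ} {u v : ℝ → ℝ → ℝ}

lemma continuousOn (hu : IsClassicalSolution T b σ f u) :
    ContinuousOn (uncurry u) (Ico 0 T ×ˢ univ) := hu.1

lemma parabolicDifferentiableAt (hu : IsClassicalSolution T b σ f u) {t : ℝ} (ht : t ∈ Ico 0 T)
    (x : ℝ) : ParabolicDifferentiableAt u t x where
  time := hu.2.1 t ht x
  space := .of_forall (hu.2.2.1 t ht)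
  deriv_space := hu.2.2.2.1 t ht x

lemma continuousOn_deriv_deriv (hu : IsClassicalSolution T b σ f u) :
    ContinuousOn (fun p : ℝ × ℝ => deriv (deriv (u p.1)) p.2) (Ico 0 T ×ˢ univ) :=
  hu.2.2.2.2.2.2.1

lemma deriv_time_eq (hu : IsClassicalSolution T b σ f u) {t : ℝ} (ht : t ∈ Ico 0 T) (x : ℝ) :
    deriv (fun s => u s x) t =
      (1 / 2) * σ x ^ 2 * deriv (deriv (u t)) x + b x * deriv (u t) x :=
  hu.2.2.2.2.2.2.2.1 t ht x

lemma initial (hu : IsClassicalSolution T b σ f u) : u 0 = f :=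
  funext hu.2.2.2.2.2.2.2.2

lemma continuous_deriv_time_initial (hu : IsClassicalSolution T b σ f u) (hT : 0 < T) :
    Continuous fun x => deriv (fun s => u s x) 0 :=
  hu.2.2.2.2.1.comp_continuous (f := fun x => (0, x)) (by fun_prop)
    fun _ => ⟨left_mem_Ico.2 hT, mem_univ _⟩

lemma continuous_deriv_initial (hu : IsClassicalSolution T b σ f u) (hT : 0 < T) :
    Continuous (deriv f) := by
  rw [← hu.initial]
  exact hu.2.2.2.2.2.1.comp_continuous (f := fun x => (0, x)) (by fun_prop)
    fun _ => ⟨left_mem_Ico.2 hT, mem_univ _⟩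

lemma continuous_deriv_deriv_initial (hu : IsClassicalSolution T b σ f u) (hT : 0 < T) :
    Continuous (deriv (deriv f)) := by
  rw [← hu.initial]
  exact hu.continuousOn_deriv_deriv.comp_continuous (f := fun x => (0, x)) (by fun_prop)
    fun _ => ⟨left_mem_Ico.2 hT, mem_univ _⟩

-- Where `f'' ≠ 0`, the equation at time `0` can be solved for `σ²`.
lemma continuousOn_sq_diffusion (hu : IsClassicalSolution T b σ f u) (hT : 0 < T) {S : Set ℝ}
    (hb : ContinuousOn b S) (hf : ∀ x ∈ S, deriv (deriv f) x ≠ 0) :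
    ContinuousOn (fun x => σ x ^ 2) S := by
  have hquot : ContinuousOn
      (fun x => 2 * (deriv (fun s => u s x) 0 - b x * deriv f x) / deriv (deriv f) x) S :=
    (continuousOn_const.mul ((hu.continuous_deriv_time_initial hT).continuousOn.sub
      (hb.mul (hu.continuous_deriv_initial hT).continuousOn))).div
      (hu.continuous_deriv_deriv_initial hT).continuousOn hf
  refine hquot.congr fun x hx => ?_
  have hfx := hf x hx
  simp only [hu.deriv_time_eq (left_mem_Ico.2 hT), hu.initial]
  field_simp
  ring

lemma parabolicOp_eq (hv : IsClassicalSolution T b ρ f v) (σ : ℝ → ℝ) {t : ℝ}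
    (ht : t ∈ Ico 0 T) (x : ℝ) :
    parabolicOp (fun _ x => (1 / 2) * σ x ^ 2) (fun _ => b) v t x =
      -((1 / 2) * ((σ x ^ 2 - ρ x ^ 2) * deriv (deriv (v t)) x)) := by
  rw [parabolicOp, hv.deriv_time_eq ht]
  ring

lemma parabolicOp_sub_eq (hu : IsClassicalSolution T b σ f u) (hv : IsClassicalSolution T b ρ f v)
    {t : ℝ} (ht : t ∈ Ico 0 T) (x : ℝ) :
    parabolicOp (fun _ x => (1 / 2) * σ x ^ 2) (fun _ => b) (u - v) t x =
      (1 / 2) * ((σ x ^ 2 - ρ x ^ 2) * deriv (deriv (v t)) x) := by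
  rw [parabolicOp_sub (hu.parabolicDifferentiableAt ht x)
    (hv.parabolicDifferentiableAt ht x), hu.parabolicOp_eq σ ht, hv.parabolicOp_eq σ ht]
  ring

lemma deriv_time_sub_initial (hu : IsClassicalSolution T b σ f u)
    (hv : IsClassicalSolution T b ρ f v) (hT : 0 < T) (x : ℝ) :
    deriv (fun s => (u - v) s x) 0 = (1 / 2) * ((σ x ^ 2 - ρ x ^ 2) * deriv (deriv f) x) := by
  have h0 : (0 : ℝ) ∈ Ico 0 T := left_mem_Ico.2 hT
  have hsub : deriv (fun s => (u - v) s x) 0 =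
      deriv (fun s => u s x) 0 - deriv (fun s => v s x) 0 :=
    deriv_sub (hu.parabolicDifferentiableAt h0 x).time (hv.parabolicDifferentiableAt h0 x).time
  rw [hsub, hu.deriv_time_eq h0, hv.deriv_time_eq h0, hu.initial, hv.initial]
  ring

lemma eventually_deriv_deriv_mul_pos (hu : IsClassicalSolution T b σ f u) (hT : 0 < T)
    {K : Set ℝ} (hK : IsCompact K) (hf : ∀ x ∈ K, deriv (deriv f) x ≠ 0) :
    ∀ᶠ t in 𝓝[≥] 0, ∀ x ∈ K, 0 < deriv (deriv f) x * deriv (deriv (u t)) x := by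
  have hlocal : ∀ᶠ p in 𝓝[≥] (0 : ℝ) ×ˢ 𝓝ˢ K,
      0 < deriv (deriv f) p.2 * deriv (deriv (u p.1)) p.2 := by
    rw [hK.prod_nhdsSet_eq_biSup]
    simp only [eventually_iSup]
    intro y hy
    have hcont := ((hu.continuous_deriv_deriv_initial hT).comp continuous_snd).continuousOn.mul
      hu.continuousOn_deriv_deriv (0, y) ⟨left_mem_Ico.2 hT, mem_univ y⟩
    have hpos : 0 < deriv (deriv f) y * deriv (deriv (u 0)) y := by
      rw [hu.initial]
      exact mul_self_pos.2 (hf y hy)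
    have hev := hcont.eventually_const_lt hpos
    rwa [nhdsWithin_prod_eq, nhdsWithin_univ, nhdsWithin_Ico_eq_nhdsGE hT] at hev
  exact hlocal.curry.mono fun t ht x hx => subset_of_mem_nhdsSet ht hx

lemma eventually_parabolicOp_nonneg (hu : IsClassicalSolution T b σ f u)
    (hv : IsClassicalSolution T b ρ f v) (hT : 0 < T) {K : Set ℝ} (hK : IsCompact K)
    (hf : ∀ x ∈ K, deriv (deriv f) x ≠ 0) {r : ℝ}
    (hr : ∀ x ∈ K, 0 ≤ r * ((σ x ^ 2 - ρ x ^ 2) * deriv (deriv f) x)) :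
    ∀ᶠ t in 𝓝[>] 0, ∀ x ∈ K,
      0 ≤ parabolicOp (fun _ x => (1 / 2) * σ x ^ 2) (fun _ => b) (r • (u - v)) t x := by
  filter_upwards [nhdsWithin_mono 0 Ioi_subset_Ici_self
    (hv.eventually_deriv_deriv_mul_pos hT hK hf), Ioo_mem_nhdsGT hT] with t hsign ht x hx
  rw [parabolicOp_const_smul, hu.parabolicOp_sub_eq hv (Ioo_subset_Ico_self ht)]
  refine nonneg_of_mul_nonneg_left ?_ (sq_pos_of_ne_zero (hf x hx))
  calc (0 : ℝ)
    _ ≤ (1 / 2) * ((r * ((σ x ^ 2 - ρ x ^ 2) * deriv (deriv f) x)) *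
          (deriv (deriv f) x * deriv (deriv (v t)) x)) :=
        mul_nonneg (by norm_num) (mul_nonneg (hr x hx) (hsign x hx).le)
    _ = r * ((1 / 2) * ((σ x ^ 2 - ρ x ^ 2) * deriv (deriv (v t)) x)) *
          deriv (deriv f) x ^ 2 := by ring

lemma eventually_smul_sub_pos (hu : IsClassicalSolution T b σ f u)
    (hv : IsClassicalSolution T b ρ f v) (hT : 0 < T) {r x : ℝ}
    (hr : 0 < r * ((σ x ^ 2 - ρ x ^ 2) * deriv (deriv f) x)) :
    ∀ᶠ t in 𝓝[>] 0, 0 < (r • (u - v)) t x := by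
  have hderiv : deriv (fun t => (r • (u - v)) t x) 0 =
      (1 / 2) * (r * ((σ x ^ 2 - ρ x ^ 2) * deriv (deriv f) x)) := by
    have hsmul : deriv (fun t => (r • (u - v)) t x) 0 = r * deriv (fun t => (u - v) t x) 0 :=
      deriv_const_mul_field r
    rw [hsmul, hu.deriv_time_sub_initial hv hT]
    ring
  refine eventually_nhdsGT_pos_of_deriv_pos (g := fun t => (r • (u - v)) t x) ?_ ?_
  · rw [hderiv]
    positivity
  · simp [hu.initial, hv.initial]

lemma smul_sub_pos_of_pos_right (hu : IsClassicalSolution T b σ f u)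
    (hv : IsClassicalSolution T b ρ f v) {x₀ x₁ τ r : ℝ} (hτ : τ ∈ Ioo 0 T)
    (hb : ContinuousOn b (Icc x₀ x₁)) (hσ : ContinuousOn (fun x => σ x ^ 2) (Icc x₀ x₁))
    (hσ_ne : ∀ x ∈ Icc x₀ x₁, σ x ≠ 0)
    (hop : ∀ t ∈ Ioc 0 τ, ∀ x ∈ Ioo x₀ x₁,
      0 ≤ parabolicOp (fun _ x => (1 / 2) * σ x ^ 2) (fun _ => b) (r • (u - v)) t x)
    (hleft : ∀ t ∈ Ioc 0 τ, 0 ≤ (r • (u - v)) t x₀)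
    (hright : ∀ t ∈ Ioc 0 τ, 0 < (r • (u - v)) t x₁) :
    ∀ x ∈ Ioc x₀ x₁, 0 < (r • (u - v)) τ x := by
  have hsub : Icc 0 τ ⊆ Ico 0 T := Icc_subset_Ico_right hτ.2
  have hcont : ContinuousOn (uncurry (r • (u - v))) (Icc 0 τ ×ˢ Icc x₀ x₁) :=
    ((hu.continuousOn.sub hv.continuousOn).const_smul r).mono (prod_mono hsub (subset_univ _))
  have hdiff : ∀ t ∈ Ioc 0 τ, ∀ x ∈ Ioo x₀ x₁, ParabolicDifferentiableAt (r • (u - v)) t x :=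
    fun t ht x _ => ((hu.parabolicDifferentiableAt (hsub (Ioc_subset_Icc_self ht)) x).sub
      (hv.parabolicDifferentiableAt (hsub (Ioc_subset_Icc_self ht)) x)).const_smul r
  have hbd : ∀ p ∈ parabolicBoundary 0 τ x₀ x₁, 0 ≤ uncurry (r • (u - v)) p := by
    rintro ⟨t, x⟩ hp
    obtain ⟨⟨ht, -⟩, hside⟩ := mem_parabolicBoundary_iff.1 hp
    rcases ht.1.eq_or_lt with rfl | ht₀
    · simp [hu.initial, hv.initial]
    · rcases hside with rfl | rfl | rfl
      · exact absurd ht₀ (lt_irrefl _)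
      · exact hleft t ⟨ht₀, ht.2⟩
      · exact (hright t ⟨ht₀, ht.2⟩).le
  exact pos_of_parabolicOp_nonneg_of_continuousOn (continuousOn_const.mul hσ)
    (fun x hx => mul_pos one_half_pos (sq_pos_of_ne_zero (hσ_ne x hx))) hb hcont hdiff hop hbd
    hτ.1 (hright τ ⟨hτ.1, le_rfl⟩)

end IsClassicalSolution

theorem diffusion_uniqueness_constant_sign_interval_general {T : ℝ} (hT : 0 < T)
    {b sigma sigmat f : ℝ → ℝ} {u ut : ℝ → ℝ → ℝ}
    (hu : IsClassicalSolution T b sigma f u) (hut : IsClassicalSolution T b sigmat f ut)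
    {ε : ℝ} (hε : 0 < ε) {ω : Set ℝ} {x₀ x₂ : ℝ} (hω : ω ∈ 𝓝[≥] x₀)
    (hobs : ∀ t ∈ Ioo 0 ε, ∀ x ∈ ω, u t x = ut t x)
    (hb : ContinuousOn b (Icc x₀ x₂)) (hs : ∀ x ∈ Icc x₀ x₂, 0 < sigma x)
    (hst : ∀ x ∈ Icc x₀ x₂, 0 ≤ sigmat x) (hf : ∀ x ∈ Icc x₀ x₂, deriv (deriv f) x ≠ 0)
    (hsign : ConstSignOn (fun x => sigma x ^ 2 - sigmat x ^ 2) (Icc x₀ x₂)) :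
    ∀ x ∈ Icc x₀ x₂, sigma x = sigmat x := by
  intro x₁ hx₁
  by_contra hne
  obtain ⟨r, hr, hsource⟩ := (hsign.mul (.of_isPreconnected isPreconnected_Icc
    (hu.continuous_deriv_deriv_initial hT).continuousOn hf)).exists_mul_nonneg
  have hsq : sigma x₁ ^ 2 - sigmat x₁ ^ 2 ≠ 0 :=
    sub_ne_zero.2 fun h => hne ((sq_eq_sq₀ (hs x₁ hx₁).le (hst x₁ hx₁)).1 h)
  have hsource₁ := (hsource x₁ hx₁).lt_of_ne' (mul_ne_zero hr (mul_ne_zero hsq (hf x₁ hx₁)))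
  obtain ⟨τ, hτ, hsmall⟩ := mem_nhdsGT_iff_exists_Ioc_subset.1
    ((hu.eventually_parabolicOp_nonneg hut hT isCompact_Icc hf hsource).and
      ((hu.eventually_smul_sub_pos hut hT hsource₁).and
        (inter_mem (Ioo_mem_nhdsGT hT) (Ioo_mem_nhdsGT hε))))
  have hpos : ∀ t ∈ Ioc 0 τ, 0 < (r • (u - ut)) t x₁ := fun t ht => (hsmall ht).2.1
  have hzero : ∀ t ∈ Ioc 0 τ, ∀ x ∈ ω, (r • (u - ut)) t x = 0 := fun t ht x hx => by
    simp [hobs t (hsmall ht).2.2.2 x hx]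
  have hτ_mem : τ ∈ Ioc 0 τ := right_mem_Ioc.2 hτ
  have hx₀ : x₀ ∈ ω := mem_of_mem_nhdsWithin self_mem_Ici hω
  have hlt : x₀ < x₁ := hx₁.1.lt_of_ne fun h =>
    (hpos τ hτ_mem).ne' (hzero τ hτ_mem x₁ (h ▸ hx₀))
  have hsub : Icc x₀ x₁ ⊆ Icc x₀ x₂ := Icc_subset_Icc_right hx₁.2
  have hpropagate := hu.smul_sub_pos_of_pos_right hut (hsmall hτ_mem).2.2.1 (hb.mono hsub)
    ((hu.continuousOn_sq_diffusion hT hb hf).mono hsub) (fun x hx => (hs x (hsub hx)).ne')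
    (fun t ht x hx => (hsmall ht).1 x (hsub (Ioo_subset_Icc_self hx)))
    (fun t ht => (hzero t ht x₀ hx₀).ge) hpos
  obtain ⟨y, hyω, hy⟩ : (ω ∩ Ioc x₀ x₁).Nonempty := nonempty_of_mem
    (inter_mem (nhdsWithin_mono x₀ Ioi_subset_Ici_self hω) (Ioc_mem_nhdsGT hlt))
  exact (hpropagate y hy).ne' (hzero τ hτ_mem y hyω)

/-- Key step in the proof of Theorem 2: on an interval `[x₀, x₂]` (with `x₀` in the
observation set) where `σ² - σ̃²` has a constant sign, the observation forces
`σ = σ̃`. -/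
theorem diffusion_uniqueness_constant_sign_interval
    (T : ℝ) (hT : 0 < T)
    (b sigma sigmat : ℝ → ℝ)
    (hbLip : ∃ K, LipschitzWith K b)
    (hs : ClassM sigma) (hst : ClassM sigmat)
    (hspos : ∀ x, 0 < sigma x) (hstpos : ∀ x, 0 < sigmat x)
    (f : ℝ → ℝ) (hf : ContDiff ℝ 2 f) (hfdd : ∀ x, deriv (deriv f) x ≠ 0)
    (u ut : ℝ → ℝ → ℝ)
    (hu : IsClassicalSolution T b sigma f u)
    (hut : IsClassicalSolution T b sigmat f ut)
    (ε : ℝ) (hε : ε ∈ Ioo 0 T)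
    (ω : Set ℝ) (hω : IsOpen ω) (hωne : ω.Nonempty)
    (hobs : ∀ t ∈ Ioo 0 ε, ∀ x ∈ ω, u t x = ut t x)
    (x₀ x₂ : ℝ) (hx₀ : x₀ ∈ ω) (hx₂ : x₀ < x₂)
    (hsign : ConstSignOn (fun x => (sigma x) ^ 2 - (sigmat x) ^ 2) (Icc x₀ x₂)) :
    ∀ x ∈ Icc x₀ x₂, sigma x = sigmat x := by
  obtain ⟨K, hK⟩ := hbLip
  exact diffusion_uniqueness_constant_sign_interval_general hT hu hut hε.1
    (mem_nhdsWithin_of_mem_nhds (hω.mem_nhds hx₀)) hobs hK.continuous.continuousOn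
    (fun x _ => hspos x) (fun x _ => (hstpos x).le) (fun x _ => hfdd x) hsign
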